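/- Let φ be the morphism on {a,b} with φ(a) = a·x·a and φ(b) = b, where x is a finite word containing the letter b, let w be the infinite fixed point of φ starting with a, and let h_b be the largest k such that b^k is a factor of x. Then the factors of w of length h_b + 2 are exactly the factors of φ²(a) of length h_b + 2. -/

import Mathlib

/-!
Write `A = φ(a) = a·x·a`.  Since `φ(b) = b`, applying `φ` never changes the blocks of `b`'s
standing between consecutive `a`'s of a word, it only inserts those of `A`.  Hence every iterate
`φⁿ(a)` is a word `a bᵏ¹ a bᵏ² ⋯ a` in which each `a bᵏ a` is already a factor of `A`
(`GapWord`, `GapWord.subst`).  Its image is `A bᵏ¹ A bᵏ² ⋯ A`, and a window no longer than `A`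
meets at most two consecutive copies of `A`, so it lies in some `A bᵏ A = φ(a bᵏ a)`, which is a
factor of `φ(A) = φ²(a)` (`GapWord.infix_subst`).  As `bʰ` is a factor of `x`, windows of length
`h + 2` are short enough.  Conversely `φ²(a)` is a prefix of `w`, and arbitrarily long prefixes
of `w` are of the form above (`exists_gapWord_prefix`).
-/

/-- The factor `w[i..i+l-1]` of an infinite word, as a list. -/
def seg {α : Type*} (w : ℕ → α) (i l : ℕ) : List α :=
  (List.range l).map fun k => w (i + k)

/-- The finite word `u` occurs in `w` at position `i`. -/
def occursAt {α : Type*} (u : List α) (w : ℕ → α) (i : ℕ) : Prop :=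
  u = seg w i u.length

/-- `u` is a factor of the infinite word `w`. -/
def IsFactor {α : Type*} (u : List α) (w : ℕ → α) : Prop :=
  ∃ i, occursAt u w i

/-- The shift, erasing the first letter. -/
def shift {α : Type*} (w : ℕ → α) : ℕ → α := fun n => w (n + 1)

/-- Strict lexicographic order on infinite words. -/
def lexLt {α : Type*} [LinearOrder α] (u v : ℕ → α) : Prop :=
  ∃ n, (∀ k < n, u k = v k) ∧ u n < v n

/-- Non-strict lexicographic order on infinite words. -/
def lexLe {α : Type*} [LinearOrder α] (u v : ℕ → α) : Prop :=
  lexLt u v ∨ u = v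

/-- A morphism `φ : α → List α` applied to a finite word. -/
def substList {α : Type*} (φ : α → List α) (u : List α) : List α :=
  u.flatMap φ

/-- A (non-erasing) morphism applied to an infinite word:
letter number `n` of `φ(w[0])φ(w[1])⋯`. -/
def substInf {α : Type*} (φ : α → List α) (w : ℕ → α) : ℕ → α :=
  fun n => (substList φ (seg w 0 (n + 1))).getD n (w 0)

/-- A morphism is non-erasing if images of all letters are nonempty. -/
def NonErasing {α : Type*} (φ : α → List α) : Prop := ∀ c, φ c ≠ []

/-- `w` is ultimately periodic, i.e. of the form `u·v·v·v·⋯` with `v` nonempty. -/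
def UltimatelyPeriodic {α : Type*} (w : ℕ → α) : Prop :=
  ∃ p, 0 < p ∧ ∃ N, ∀ n, N ≤ n → w (n + p) = w n

/-- Membership in the orbit closure `L_w` of `w` (the closure of `{σⁿ(w)}` in the
product topology): every prefix of `z` occurs in `w`. -/
def InOrbitClosure {α : Type*} (z w : ℕ → α) : Prop :=
  ∀ n, ∃ m, seg z 0 n = seg w m n

/-- Every factor of `w` occurs infinitely often in `w`. -/
def Recurrent {α : Type*} (w : ℕ → α) : Prop :=
  ∀ u : List α, IsFactor u w → ∀ N, ∃ i, N ≤ i ∧ occursAt u w i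

/-- Every factor of `w` occurs in `w` with bounded gaps: there is `C` such that every
window of length `C` contains an occurrence. -/
def UniformlyRecurrent {α : Type*} (w : ℕ → α) : Prop :=
  ∀ u : List α, IsFactor u w →
    ∃ C, ∀ i, ∃ j, i ≤ j ∧ j + u.length ≤ i + C ∧ occursAt u w j

/-- A non-erasing morphism is order-preserving if for all infinite words `u, v`:
`u < v` iff `φ(u) < φ(v)`. -/
def OrderPreserving {α : Type*} [LinearOrder α] (φ : α → List α) : Prop :=
  ∀ u v : ℕ → α, lexLt u v ↔ lexLt (substInf φ u) (substInf φ v)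

/-- `z₀` is the lexicographically greatest element of `S`. -/
def IsLexGreatest {α : Type*} [LinearOrder α] (S : Set (ℕ → α)) (z₀ : ℕ → α) : Prop :=
  z₀ ∈ S ∧ ∀ z ∈ S, z = z₀ ∨ lexLt z z₀

/-- `z₀` is the lexicographically least element of `S`. -/
def IsLexLeast {α : Type*} [LinearOrder α] (S : Set (ℕ → α)) (z₀ : ℕ → α) : Prop :=
  z₀ ∈ S ∧ ∀ z ∈ S, z = z₀ ∨ lexLt z₀ z

/-- A sequence of reals is equidistributed on `[0,1]`. -/
def Equidistributed (x : ℕ → ℝ) : Prop :=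
  ∀ c d : ℝ, 0 ≤ c → c ≤ d → d ≤ 1 →
    Filter.Tendsto
      (fun N : ℕ => (((Finset.range N).filter fun n => c ≤ x n ∧ x n ≤ d).card : ℝ) / N)
      Filter.atTop (nhds (d - c))

/-- Prepend a finite word to an infinite word. -/
def prependWord {α : Type*} (u : List α) (w : ℕ → α) : ℕ → α :=
  fun n => if h : n < u.length then u.get ⟨n, h⟩ else w (n - u.length)

/-! ### Segments of infinite words -/

theorem seg_length {α : Type*} (w : ℕ → α) (i l : ℕ) : (seg w i l).length = l := by
  simp [seg]

theorem seg_add {α : Type*} (w : ℕ → α) (i l m : ℕ) :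
    seg w i (l + m) = seg w i l ++ seg w (i + l) m := by
  simp [seg, List.range_add, Function.comp_def, add_assoc]

theorem isFactor_iff_exists_infix {α : Type*} (w : ℕ → α) (u : List α) :
    IsFactor u w ↔ ∃ n, u <:+: seg w 0 n := by
  constructor
  · rintro ⟨i, hi⟩
    refine ⟨i + u.length, seg w 0 i, [], ?_⟩
    rw [seg_add, List.append_nil, zero_add]
    exact congrArg _ hi
  · rintro ⟨n, s, t, h⟩
    have hn : n = s.length + u.length + t.length := by
      have := congrArg List.length h
      simpa [seg_length, add_assoc] using this.symm
    rw [hn, seg_add, seg_add] at h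
    have h1 := List.append_inj_left h (by simp [seg_length])
    have h2 := List.append_inj_right h1 (by simp [seg_length])
    refine ⟨s.length, ?_⟩
    simpa [occursAt] using h2

theorem length_le_length_substList {α : Type*} {φ : α → List α} (hφ : NonErasing φ)
    (u : List α) : u.length ≤ (substList φ u).length := by
  induction u with
  | nil => simp
  | cons c u ih =>
    have := List.length_pos_iff.mpr (hφ c)
    simp only [substList, List.flatMap_cons, List.length_append, List.length_cons] at ih ⊢
    omega

theorem substList_append {α : Type*} (φ : α → List α) (u v : List α) :
    substList φ (u ++ v) = substList φ u ++ substList φ v := by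
  simp [substList]

theorem substList_infix {α : Type*} (φ : α → List α) {u v : List α} (h : u <:+: v) :
    substList φ u <:+: substList φ v := by
  obtain ⟨s, t, rfl⟩ := h
  exact ⟨substList φ s, substList φ t, by simp [substList_append]⟩

/-- The image of a prefix of a fixed point is again a prefix. -/
theorem substList_seg {α : Type*} {φ : α → List α} (hφ : NonErasing φ) {w : ℕ → α}
    (hfp : substInf φ w = w) (m : ℕ) :
    substList φ (seg w 0 m) = seg w 0 (substList φ (seg w 0 m)).length := by
  apply List.ext_getElem
  · simp [seg_length]
  intro n h1 h2
  have hlen := length_le_length_substList hφ (seg w 0 (n + 1))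
  rw [seg_length] at hlen
  have hw : w n = (substList φ (seg w 0 (n + 1)))[n] := by
    conv_lhs => rw [← hfp]
    exact List.getD_eq_getElem _ _ hlen
  have hr : (seg w 0 (substList φ (seg w 0 m)).length)[n] = w n := by simp [seg]
  rw [hr, hw]
  rcases le_total m (n + 1) with h | h
  · obtain ⟨d, hd⟩ := Nat.exists_eq_add_of_le h
    simp only [hd, seg_add, substList_append]
    rw [List.getElem_append_left h1]
  · obtain ⟨d, rfl⟩ := Nat.exists_eq_add_of_le h
    simp only [seg_add w 0 (n + 1) d, substList_append]
    rw [List.getElem_append_left (by omega)]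

/-- A window no longer than the middle word of a triple product misses the first or the last. -/
theorem infix_append_append_cases {α : Type*} {u X Y r : List α} (hu : u.length ≤ Y.length)
    (h : u <:+: X ++ Y ++ r) : u <:+: X ++ Y ∨ u <:+: Y ++ r := by
  obtain ⟨s, t, h⟩ := h
  rcases le_total X.length s.length with hs | hs
  · right
    have hp : X <+: s := by
      apply List.prefix_of_prefix_length_le (l₃ := X ++ Y ++ r) _ _ hs
      · exact ⟨Y ++ r, by simp⟩
      · exact ⟨u ++ t, by simpa using h⟩
    obtain ⟨s', rfl⟩ := hp
    exact ⟨s', t, by simpa using h⟩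
  · left
    have hp : s ++ u <+: X ++ Y := by
      apply List.prefix_of_prefix_length_le (l₃ := X ++ Y ++ r) _ _ (by simp; omega)
      · exact ⟨t, h⟩
      · exact ⟨r, rfl⟩
    exact (List.suffix_append s u).isInfix.trans hp.isInfix

/-! ### Words all of whose gaps occur in a given word -/

/-- `GapWord A v`: the word `v` has the form `a bᵏ¹ a bᵏ² ⋯ a` (with `a = false`, `b = true`)
and each of the factors `a bᵏⁱ a` is a factor of `A`. -/
inductive GapWord (A : List Bool) : List Bool → Prop
  | single : GapWord A [false]
  | cons (k : ℕ) (v : List Bool)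
      (hk : false :: (List.replicate k true ++ [false]) <:+: A) (hv : GapWord A v) :
      GapWord A (false :: (List.replicate k true ++ v))

theorem GapWord.exists_cons {A v : List Bool} (h : GapWord A v) : ∃ r, v = false :: r := by
  cases h <;> exact ⟨_, rfl⟩

/-- Two gap words may be joined by any block of `b`'s that occurs as a gap of `A`. -/
theorem GapWord.join {A y v : List Bool} (hy : GapWord A y) (hv : GapWord A v) {k : ℕ}
    (hk : false :: (List.replicate k true ++ [false]) <:+: A) :
    GapWord A (y ++ (List.replicate k true ++ v)) := by
  induction hy with
  | single => exact .cons k v hk hv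
  | cons j y hj _ ih => simpa using GapWord.cons j _ hj ih

/-- The block `bᵏ` collects the run of `b`'s read so far, which makes the statement inductive
in `z`. -/
theorem gapWord_of_infix {A : List Bool} (z : List Bool) (k : ℕ)
    (h : false :: (List.replicate k true ++ (z ++ [false])) <:+: A) :
    GapWord A (false :: (List.replicate k true ++ (z ++ [false]))) := by
  induction z generalizing k with
  | nil => exact .cons k _ (by simpa using h) .single
  | cons c z ih =>
    cases c with
    | true =>
      have e : List.replicate k true ++ (true :: z ++ [false])
          = List.replicate (k + 1) true ++ (z ++ [false]) := by
        simp [List.replicate_succ']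
      rw [e] at h ⊢
      exact ih _ h
    | false =>
      refine .cons k _ (List.IsInfix.trans ?_ h) (ih 0 (List.IsInfix.trans ?_ h))
      · exact ⟨[], z ++ [false], by simp⟩
      · exact ⟨false :: List.replicate k true, [], by simp⟩

section Morphism

variable {x : List Bool} {φ : Bool → List Bool}

theorem nonErasing_of_eq (hφa : φ false = false :: (x ++ [false])) (hφb : φ true = [true]) :
    NonErasing φ := by
  rintro (_ | _) <;> simp [hφa, hφb]

theorem substList_replicate (hφb : φ true = [true]) (k : ℕ) :
    substList φ (List.replicate k true) = List.replicate k true := by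
  induction k with
  | zero => rfl
  | succ k ih =>
    simp only [substList] at ih
    simp [substList, List.replicate_succ, hφb, ih]

theorem substList_block (hφb : φ true = [true]) (k : ℕ) (v : List Bool) :
    substList φ (false :: (List.replicate k true ++ v))
      = φ false ++ (List.replicate k true ++ substList φ v) := by
  rw [← substList_replicate hφb k, ← substList_append, substList_replicate hφb k]
  rfl

theorem GapWord.subst (hφa : φ false = false :: (x ++ [false])) (hφb : φ true = [true])
    {v : List Bool} (hv : GapWord (φ false) v) : GapWord (φ false) (substList φ v) := by
  have hA : GapWord (φ false) (φ false) := by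
    have := gapWord_of_infix (A := φ false) x 0 (by simp [hφa])
    simpa [← hφa] using this
  induction hv with
  | single => simpa [substList] using hA
  | cons k v hk _ ih =>
    rw [substList_block hφb]
    exact hA.join ih hk

/-- Short factors of the image of a gap word already occur in `φ²(a)`. -/
theorem GapWord.infix_subst (hφa : φ false = false :: (x ++ [false])) (hφb : φ true = [true])
    {u v : List Bool} (hv : GapWord (φ false) v) (hu : u.length ≤ (φ false).length)
    (h : u <:+: substList φ v) : u <:+: substList φ (φ false) := by
  induction hv with
  | single =>
    refine h.trans (substList_infix φ ?_)
    exact ⟨[], x ++ [false], by simp [hφa]⟩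
  | cons k v hk hv ih =>
    obtain ⟨r, hr⟩ := hv.exists_cons
    have hsub : substList φ v = φ false ++ substList φ r := by rw [hr]; rfl
    rw [substList_block hφb, hsub, ← List.append_assoc, ← List.append_assoc] at h
    rcases infix_append_append_cases hu h with h | h
    · refine h.trans (List.IsInfix.trans ?_ (substList_infix φ hk))
      rw [substList_block hφb]
      simp [substList]
    · exact ih (by rwa [hsub])

theorem exists_gapWord_prefix (hφa : φ false = false :: (x ++ [false])) (hφb : φ true = [true])
    {w : ℕ → Bool} (h0 : w 0 = false) (hfp : substInf φ w = w) (n : ℕ) :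
    ∃ m, n ≤ m ∧ GapWord (φ false) (seg w 0 m) := by
  have hne := nonErasing_of_eq hφa hφb
  induction n with
  | zero => exact ⟨1, by omega, by simpa [seg, h0] using GapWord.single⟩
  | succ n ih =>
    obtain ⟨m, hm, hg⟩ := ih
    refine ⟨(substList φ (seg w 0 m)).length, ?_, ?_⟩
    · obtain ⟨r, hr⟩ := hg.exists_cons
      have h1 := length_le_length_substList hne r
      have h2 := seg_length w 0 m
      have h3 : substList φ (seg w 0 m) = φ false ++ substList φ r := by rw [hr]; rfl
      rw [hr] at h2
      rw [h3, hφa]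
      simp at h2 ⊢
      omega
    · rw [← substList_seg hne hfp]
      exact hg.subst hφa hφb

end Morphism

/-- (Alphabet `{a,b}`, `a = false`, `b = true`.)  Let
`φ(a) = a·x·a`, `φ(b) = b` with `b` occurring in `x`, let `w` be the infinite fixed
point of `φ` starting with `a`, and let `h_b` be the largest `k` such that `bᵏ` is a
factor of `x`.  Then the factors of `w` of length `h_b + 2` are exactly the factors of
`φ²(a)` of that length. -/
theorem factors_of_length_hb_add_two
    (x : List Bool) (hx : true ∈ x)
    (φ : Bool → List Bool)
    (hφa : φ false = false :: (x ++ [false])) (hφb : φ true = [true])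
    (w : ℕ → Bool) (h0 : w 0 = false) (hfp : substInf φ w = w)
    (hb : ℕ)
    (hbocc : List.replicate hb true <:+: x)
    (hbmax : ¬ List.replicate (hb + 1) true <:+: x) :
    ∀ u : List Bool, u.length = hb + 2 →
      (IsFactor u w ↔ u <:+: substList φ (φ false)) := by
  intro u hu
  have hne := nonErasing_of_eq hφa hφb
  rw [isFactor_iff_exists_infix]
  constructor
  · rintro ⟨n, h⟩
    obtain ⟨m, hm, hg⟩ := exists_gapWord_prefix hφa hφb h0 hfp n
    have hpre : ∀ {i j : ℕ}, i ≤ j → seg w 0 i <:+: seg w 0 j := by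
      intro i j hij
      obtain ⟨d, rfl⟩ := Nat.exists_eq_add_of_le hij
      rw [seg_add]
      exact (List.prefix_append _ _).isInfix
    have hlen := length_le_length_substList hne (seg w 0 m)
    rw [seg_length] at hlen
    refine hg.infix_subst hφa hφb ?_ (h.trans ?_)
    · have := hbocc.length_le
      simp only [List.length_replicate] at this
      simp [hφa]
      omega
    · rw [substList_seg hne hfp]
      exact hpre (hm.trans hlen)
  · intro h
    have h1 : seg w 0 1 = [false] := by simp [seg, h0]
    have h2 := substList_seg hne hfp 1
    have e : substList φ [false] = φ false := by simp [substList]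
    rw [h1, e] at h2
    have h3 := substList_seg hne hfp (φ false).length
    rw [← h2] at h3
    exact ⟨_, h3 ▸ h⟩
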